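/- arXiv:1712.01973 — 6 statements merged into one kernel-verified Lean document; each statement's English description precedes it below -/
import Mathlib

section
/- Let P and Q be rational polytopes in ℝ^d such that for every integer vector w ∈ ℤ^d and every real s > 0 one has L_{P+w}(s) = L_{Q+w}(s). Then P = Q. -/
open Set MeasureTheory Pointwise

/-- The set of integer lattice points in `ℝ^d` (as `Fin d → ℝ`). -/
def latticePts (d : ℕ) : Set (Fin d → ℝ) := {x | ∀ i, ∃ m : ℤ, x i = m}

/-- The real-parameter Ehrhart function: number of lattice points in `s • P`. -/
noncomputable def ehrhart {d : ℕ} (P : Set (Fin d → ℝ)) (s : ℝ) : ℕ :=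
  ((s • P) ∩ latticePts d).ncard

/-- Translate of a set by a vector. -/
def translateSet {d : ℕ} (P : Set (Fin d → ℝ)) (v : Fin d → ℝ) : Set (Fin d → ℝ) :=
  (fun x => x + v) '' P

/-- A polytope: convex hull of a nonempty finite set of points. -/
def IsPolytope {d : ℕ} (P : Set (Fin d → ℝ)) : Prop :=
  ∃ V : Finset (Fin d → ℝ), V.Nonempty ∧ P = convexHull ℝ (V : Set (Fin d → ℝ))

/-- A rational polytope: convex hull of a nonempty finite set of rational points. -/
def IsRationalPolytope {d : ℕ} (P : Set (Fin d → ℝ)) : Prop :=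
  ∃ V : Finset (Fin d → ℝ), V.Nonempty ∧ (∀ v ∈ V, ∀ i, ∃ q : ℚ, v i = (q : ℝ)) ∧
    P = convexHull ℝ (V : Set (Fin d → ℝ))

/-- Standard inner product on `Fin d → ℝ`. -/
def dotProd {d : ℕ} (a x : Fin d → ℝ) : ℝ := ∑ i, a i * x i

/-- A semi-rational polytope: a polytope expressible as a finite intersection of
half-spaces with integer normal vectors. -/
def IsSemiRationalPolytope {d : ℕ} (P : Set (Fin d → ℝ)) : Prop :=
  IsPolytope P ∧ ∃ (n : ℕ) (a : Fin n → Fin d → ℤ) (b : Fin n → ℝ),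
    P = ⋂ i, {x : Fin d → ℝ | dotProd (fun j => (a i j : ℝ)) x ≤ b i}

/-! Fix a rational point `p`. A suitable integer translation `w` and an arbitrarily small `s > 0`
move `p` to a lattice point `s • (p + w)`. Once `s` is so small that `s • (P ∪ Q ∪ {p} + w)` has
diameter less than `1`, no other lattice point fits into that set, so the counts for `P + w` and
`Q + w` at `s` detect whether `p ∈ P` and `p ∈ Q`. Hence `P` and `Q` have the same rational points,
and these include generators of the convex sets `P` and `Q`. -/

/-- The set of points of `ℝ^d` with rational coordinates, from which the generating points of a
rational polytope are taken. -/
def rationalPts (d : ℕ) : Set (Fin d → ℝ) := {x | ∀ i, ∃ q : ℚ, x i = q}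

section

variable {d : ℕ} {p x y v : Fin d → ℝ} {A P Q U : Set (Fin d → ℝ)} {s : ℝ}

theorem eq_of_mem_latticePts_of_dist_lt_one (hx : x ∈ latticePts d) (hy : y ∈ latticePts d)
    (hxy : dist x y < 1) : x = y := by
  funext i
  obtain ⟨m, hm⟩ := hx i
  obtain ⟨n, hn⟩ := hy i
  have hmn : |(m : ℝ) - n| < 1 := by
    simpa only [hm, hn, Real.dist_eq] using (dist_le_pi_dist x y i).trans_lt hxy
  have hmn' : |m - n| < 1 := by exact_mod_cast hmn
  rw [hm, hn, sub_eq_zero.1 (Int.abs_lt_one_iff.1 hmn')]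

theorem subsingleton_inter_latticePts_of_diam_lt_one (hA : Bornology.IsBounded A)
    (hdiam : Metric.diam A < 1) : (A ∩ latticePts d).Subsingleton :=
  fun _ hx _ hy => eq_of_mem_latticePts_of_dist_lt_one hx.2 hy.2 <|
    (Metric.dist_le_diam_of_mem hA hx.1 hy.1).trans_lt hdiam

theorem mem_smul_iff_ehrhart_ne_zero (hAU : A ⊆ U) (hU : Bornology.IsBounded U)
    (hdiam : Metric.diam (s • U) < 1) (hxU : x ∈ s • U) (hx : x ∈ latticePts d) :
    x ∈ s • A ↔ ehrhart A s ≠ 0 := by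
  have hUsub : (s • U ∩ latticePts d).Subsingleton :=
    subsingleton_inter_latticePts_of_diam_lt_one (hU.smul₀ s) hdiam
  have hAUs : s • A ∩ latticePts d ⊆ s • U ∩ latticePts d :=
    inter_subset_inter_left _ (smul_set_mono hAU)
  rw [ehrhart, ← Nat.pos_iff_ne_zero, ncard_pos (hUsub.anti hAUs).finite]
  refine ⟨fun hxA => ⟨x, hxA, hx⟩, ?_⟩
  rintro ⟨y, hy⟩
  exact hUsub (hAUs hy) ⟨hxU, hx⟩ ▸ hy.1

theorem diam_translateSet (A : Set (Fin d → ℝ)) (v : Fin d → ℝ) :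
    Metric.diam (translateSet A v) = Metric.diam A :=
  (isometry_add_right v).diam_image A

theorem isBounded_translateSet (hA : Bornology.IsBounded A) (v : Fin d → ℝ) :
    Bornology.IsBounded (translateSet A v) :=
  (isometry_add_right v).lipschitz.isBounded_image hA

theorem smul_add_mem_smul_translateSet_iff (hs : s ≠ 0) :
    s • (p + v) ∈ s • translateSet A v ↔ p ∈ A :=
  (smul_mem_smul_set_iff₀ hs _ _).trans (add_left_injective v).mem_set_image

theorem mem_iff_ehrhart_translateSet_ne_zero (hAU : A ⊆ U) (hU : Bornology.IsBounded U)
    (hpU : p ∈ U) (hs : 0 < s) (hdiam : s * Metric.diam U < 1)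
    (hp : s • (p + v) ∈ latticePts d) :
    p ∈ A ↔ ehrhart (translateSet A v) s ≠ 0 := by
  have hdiam' : Metric.diam (s • translateSet U v) < 1 := by
    rwa [diam_smul₀, diam_translateSet, Real.norm_of_nonneg hs.le]
  rw [← smul_add_mem_smul_translateSet_iff hs.ne']
  exact mem_smul_iff_ehrhart_ne_zero (image_mono hAU) (isBounded_translateSet hU v) hdiam'
    ((smul_add_mem_smul_translateSet_iff hs.ne').2 hpU) hp

theorem exists_pos_natCast_mul_eq_intCast (hp : p ∈ rationalPts d) :
    ∃ n : ℕ, 0 < n ∧ ∃ a : Fin d → ℤ, ∀ i, n * p i = a i := by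
  choose q hq using hp
  refine ⟨∏ j, (q j).den, Finset.prod_pos fun j _ => (q j).pos, ?_⟩
  refine ⟨fun i => (∏ j ∈ Finset.univ.erase i, (q j).den) * (q i).num, fun i => ?_⟩
  have hden : ((q i).den : ℝ) * q i = (q i).num := by exact_mod_cast Rat.den_mul_eq_num (q i)
  rw [← Finset.prod_erase_mul _ _ (Finset.mem_univ i), hq]
  push_cast
  rw [mul_assoc, hden]

theorem exists_small_smul_add_mem_latticePts (hp : p ∈ rationalPts d) {ε : ℝ} (hε : 0 < ε) :
    ∃ (w : Fin d → ℤ) (s : ℚ), 0 < s ∧ (s : ℝ) < ε ∧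
      (s : ℝ) • (p + fun i => (w i : ℝ)) ∈ latticePts d := by
  obtain ⟨n, hn, a, ha⟩ := exists_pos_natCast_mul_eq_intCast hp
  obtain ⟨N, hN⟩ := exists_nat_gt ε⁻¹
  have hn' : (0 : ℝ) < n := by exact_mod_cast hn
  -- Since `p = a / n`, the factor `s = n / (N n + 1)` sends `p + N a = a (N n + 1) / n` to `a`.
  refine ⟨fun i => N * a i, n / (N * n + 1), by positivity, ?_, fun i => ⟨a i, ?_⟩⟩
  · have hεN : 1 < ε * N := (inv_lt_iff_one_lt_mul₀' hε).1 hN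
    push_cast
    rw [div_lt_iff₀ (by positivity)]
    linarith [mul_lt_mul_of_pos_right hεN hn']
  · simp only [Pi.smul_apply, Pi.add_apply, smul_eq_mul]
    push_cast
    rw [← ha i]
    field_simp
    ring

theorem inter_rationalPts_eq_of_ehrhart_translateSet_eq
    (hP : Bornology.IsBounded P) (hQ : Bornology.IsBounded Q)
    (h : ∀ (w : Fin d → ℤ) (s : ℚ), 0 < s →
      ehrhart (translateSet P (fun i => (w i : ℝ))) s =
      ehrhart (translateSet Q (fun i => (w i : ℝ))) s) :
    P ∩ rationalPts d = Q ∩ rationalPts d := by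
  ext p
  refine and_congr_left fun hp => ?_
  let U := insert p (P ∪ Q)
  have hU : Bornology.IsBounded U := (hP.union hQ).insert p
  have hPU : P ⊆ U := subset_union_left.trans (subset_insert p _)
  have hQU : Q ⊆ U := subset_union_right.trans (subset_insert p _)
  have hpU : p ∈ U := mem_insert p _
  have hdiam_pos : 0 < Metric.diam U + 1 := by positivity
  obtain ⟨w, s, hs, hs_lt, hlattice⟩ :=
    exists_small_smul_add_mem_latticePts hp (one_div_pos.2 hdiam_pos)
  have hs' : (0 : ℝ) < s := by exact_mod_cast hs
  have hdiam : s * Metric.diam U < 1 := by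
    linarith [(lt_div_iff₀ hdiam_pos).1 hs_lt]
  rw [mem_iff_ehrhart_translateSet_ne_zero hPU hU hpU hs' hdiam hlattice,
    mem_iff_ehrhart_translateSet_ne_zero hQU hU hpU hs' hdiam hlattice, h w s hs]

theorem convexHull_subset_of_inter_rationalPts_subset {S : Set (Fin d → ℝ)} (hS : S ⊆ rationalPts d)
    (hQ : Convex ℝ Q) (h : convexHull ℝ S ∩ rationalPts d ⊆ Q) :
    convexHull ℝ S ⊆ Q :=
  convexHull_min (fun _ hx => h ⟨subset_convexHull ℝ S hx, hS hx⟩) hQ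

theorem stmt1_general {S T : Set (Fin d → ℝ)}
    (hS : Bornology.IsBounded S) (hT : Bornology.IsBounded T)
    (hSrat : S ⊆ rationalPts d) (hTrat : T ⊆ rationalPts d)
    (h : ∀ (w : Fin d → ℤ) (s : ℚ), 0 < s →
      ehrhart (translateSet (convexHull ℝ S) (fun i => (w i : ℝ))) s =
      ehrhart (translateSet (convexHull ℝ T) (fun i => (w i : ℝ))) s) :
    convexHull ℝ S = convexHull ℝ T := by
  have hST := inter_rationalPts_eq_of_ehrhart_translateSet_eq
    (isBounded_convexHull.2 hS) (isBounded_convexHull.2 hT) h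
  have hle : convexHull ℝ S ⊆ convexHull ℝ T :=
    convexHull_subset_of_inter_rationalPts_subset hSrat (convex_convexHull ℝ T)
      (hST.subset.trans inter_subset_left)
  have hge : convexHull ℝ T ⊆ convexHull ℝ S :=
    convexHull_subset_of_inter_rationalPts_subset hTrat (convex_convexHull ℝ S)
      (hST.superset.trans inter_subset_left)
  exact hle.antisymm hge

end

/-- the real Ehrhart functions of all integer translates determine
a rational polytope uniquely. -/
theorem stmt1 {d : ℕ} (P Q : Set (Fin d → ℝ))
    (hP : IsRationalPolytope P) (hQ : IsRationalPolytope Q)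
    (h : ∀ (w : Fin d → ℤ) (s : ℝ), 0 < s →
      ehrhart (translateSet P (fun i => (w i : ℝ))) s =
      ehrhart (translateSet Q (fun i => (w i : ℝ))) s) :
    P = Q := by
  obtain ⟨V, -, hV, rfl⟩ := hP
  obtain ⟨W, -, hW, rfl⟩ := hQ
  exact stmt1_general V.finite_toSet.isBounded W.finite_toSet.isBounded hV hW
    fun w s hs => h w s (Rat.cast_pos.2 hs)
end

section
/- Let P and Q be semi-rational polytopes in ℝ^d, each having codimension 0 or codimension 1. Suppose that L_{P+w}(s) = L_{Q+w}(s) for every integer vector w ∈ ℤ^d and every real s > 0. Then P = Q. -/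
open Set MeasureTheory Pointwise

/-!
The counts of lattice points in small dilates see individual points of a bounded set:
`t⁻¹ • (P + w)` contains the lattice point `z` iff `t • z - w ∈ P`, and once `t` exceeds the
diameter at most one `z` qualifies. Writing `δ • z + w = (δ + T) • z - (T • z - w)` with `T ∈ ℕ`
large, the Ehrhart functions of the integer translates of `P` thus decide membership in `P` of
every point on an integer translate of a line spanned by an integer vector. Such points are dense
in every affine subspace `A` of codimension at most one, because the lines through a fixed integer
point `w ∉ A` with rational direction meet a hyperplane `A` in a dense set. Hence they are dense
in the relative interior of a convex set spanning `A`, and therefore in the set itself.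
-/

section LatticePoints

variable {d : ℕ} {w z z' : Fin d → ℝ}

lemma zero_mem_latticePts : (0 : Fin d → ℝ) ∈ latticePts d := fun _ => ⟨0, by simp⟩

lemma single_one_mem_latticePts (i : Fin d) : (Pi.single i 1 : Fin d → ℝ) ∈ latticePts d :=
  fun j => ⟨(Pi.single i 1 : Fin d → ℤ) j, by simp [Pi.single_apply]⟩

lemma sub_mem_latticePts (hz : z ∈ latticePts d) (hw : w ∈ latticePts d) :
    z - w ∈ latticePts d := fun i => by
  obtain ⟨m, hm⟩ := hz i
  obtain ⟨n, hn⟩ := hw i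
  exact ⟨m - n, by simp [hm, hn]⟩

lemma natCast_smul_mem_latticePts (n : ℕ) (hz : z ∈ latticePts d) :
    (n : ℝ) • z ∈ latticePts d := fun i => by
  obtain ⟨m, hm⟩ := hz i
  exact ⟨n * m, by simp [hm]⟩

lemma eq_of_mem_latticePts_of_dist_lt_one_s3 (hz : z ∈ latticePts d) (hz' : z' ∈ latticePts d)
    (h : dist z z' < 1) : z = z' := by
  ext i
  obtain ⟨m, hm⟩ := hz i
  obtain ⟨n, hn⟩ := hz' i
  have hmn : dist m n < 1 := by
    rw [← Int.dist_cast_real, ← hm, ← hn]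
    exact (dist_le_pi_dist z z' i).trans_lt h
  rw [hm, hn, Int.pairwise_one_le_dist.eq (not_le.2 hmn)]

end LatticePoints

section SmallDilates

variable {d : ℕ} {P Q B : Set (Fin d → ℝ)} {v z z' : Fin d → ℝ} {t : ℝ}

lemma mem_inv_smul_translateSet_iff (ht : t ≠ 0) :
    z ∈ t⁻¹ • translateSet P v ↔ t • z - v ∈ P := by
  rw [mem_inv_smul_set_iff₀ ht, translateSet, image_add_right, mem_preimage, sub_eq_add_neg]

lemma eq_of_smul_sub_mem_of_diam_lt (hB : Bornology.IsBounded B) (ht : Metric.diam B < t)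
    (hz : z ∈ latticePts d) (hz' : z' ∈ latticePts d)
    (hzB : t • z - v ∈ B) (hzB' : t • z' - v ∈ B) : z = z' := by
  have ht0 : 0 < t := Metric.diam_nonneg.trans_lt ht
  refine eq_of_mem_latticePts_of_dist_lt_one_s3 hz hz' (lt_of_mul_lt_mul_left ?_ ht0.le)
  calc t * dist z z' = dist (t • z - v) (t • z' - v) := by
        rw [dist_sub_right, dist_smul₀, Real.norm_of_nonneg ht0.le]
    _ ≤ Metric.diam B := Metric.dist_le_diam_of_mem hB hzB hzB'
    _ < t * 1 := by rwa [mul_one]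

lemma smul_sub_mem_of_ehrhart_le (hB : Bornology.IsBounded B) (hPB : P ⊆ B) (hQB : Q ⊆ B)
    (ht : Metric.diam B < t)
    (h : ehrhart (translateSet P v) t⁻¹ ≤ ehrhart (translateSet Q v) t⁻¹)
    (hz : z ∈ latticePts d) (hzP : t • z - v ∈ P) : t • z - v ∈ Q := by
  have ht0 : t ≠ 0 := (Metric.diam_nonneg.trans_lt ht).ne'
  have hP_sub : (t⁻¹ • translateSet P v ∩ latticePts d).Subsingleton := by
    rintro y ⟨hyP, hy⟩ y' ⟨hyP', hy'⟩
    rw [mem_inv_smul_translateSet_iff ht0] at hyP hyP'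
    exact eq_of_smul_sub_mem_of_diam_lt hB ht hy hy' (hPB hyP) (hPB hyP')
  have hP_pos : 0 < ehrhart (translateSet P v) t⁻¹ :=
    (ncard_pos hP_sub.finite).2 ⟨z, (mem_inv_smul_translateSet_iff ht0).2 hzP, hz⟩
  obtain ⟨y, hyQ, hy⟩ := nonempty_of_ncard_ne_zero (hP_pos.trans_le h).ne'
  rw [mem_inv_smul_translateSet_iff ht0] at hyQ
  rwa [eq_of_smul_sub_mem_of_diam_lt hB ht hz hy (hPB hzP) (hQB hyQ)]

end SmallDilates

/-- The union of all integer translates of lines through the origin spanned by an integer vector: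
the points of a bounded set that the Ehrhart functions of its integer translates detect. -/
def latticeLinePts (d : ℕ) : Set (Fin d → ℝ) :=
  {x | ∃ δ : ℝ, ∃ z ∈ latticePts d, ∃ w ∈ latticePts d, x = δ • z + w}

lemma inter_latticeLinePts_subset_of_ehrhart_le {d : ℕ} {P Q : Set (Fin d → ℝ)}
    (hP : Bornology.IsBounded P) (hQ : Bornology.IsBounded Q)
    (h : ∀ w ∈ latticePts d, ∀ s : ℝ, 0 < s →
      ehrhart (translateSet P w) s ≤ ehrhart (translateSet Q w) s) :
    P ∩ latticeLinePts d ⊆ Q := by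
  rintro _ ⟨hxP, δ, z, hz, w, hw, rfl⟩
  obtain ⟨T, hT⟩ := exists_nat_gt (Metric.diam (P ∪ Q) - δ)
  have ht : Metric.diam (P ∪ Q) < δ + T := by linarith
  have hx : δ • z + w = (δ + T) • z - ((T : ℝ) • z - w) := by module
  rw [hx] at hxP ⊢
  exact smul_sub_mem_of_ehrhart_le (hP.union hQ) subset_union_left subset_union_right ht
    (h _ (sub_mem_latticePts (natCast_smul_mem_latticePts T hz) hw) _
      (inv_pos.2 (Metric.diam_nonneg.trans_lt ht))) hz hxP

lemma exists_eq_ker_of_finrank_add_one_eq {K V : Type*} [Field K] [AddCommGroup V] [Module K V]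
    [FiniteDimensional K V] {W : Submodule K V}
    (hW : Module.finrank K W + 1 = Module.finrank K V) :
    ∃ f : V →ₗ[K] K, f ≠ 0 ∧ W = LinearMap.ker f := by
  have hWtop : W < ⊤ := Submodule.lt_top_of_finrank_lt_finrank (by lia)
  obtain ⟨f, hf, hWf⟩ := W.exists_le_ker_of_lt_top hWtop
  have hker := Module.Dual.finrank_ker_add_one_of_ne_zero hf
  exact ⟨f, hf, Submodule.eq_of_le_of_finrank_le hWf (by lia)⟩

section Density

variable {d : ℕ}

lemma exists_mem_latticePts_smul_eq_ratCast (q : Fin d → ℚ) :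
    ∃ r : ℝ, ∃ z ∈ latticePts d, r • z = Pi.map (fun _ => Rat.cast) q := by
  obtain ⟨D, hD⟩ := IsLocalization.exist_integer_multiples_of_finite (nonZeroDivisors ℤ) q
  choose m hm using hD
  have hD0 : ((D : ℤ) : ℝ) ≠ 0 := Int.cast_ne_zero.2 (nonZeroDivisors.coe_ne_zero D)
  refine ⟨((D : ℤ) : ℝ)⁻¹, fun i => m i, fun i => ⟨m i, rfl⟩, ?_⟩
  ext i
  have hmi : (m i : ℝ) = (D : ℤ) * (q i : ℝ) := by
    exact_mod_cast congrArg (Rat.cast : ℚ → ℝ) ((hm i).trans (zsmul_eq_mul _ _))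
  simp [hmi, hD0]

lemma smul_ratCast_add_mem_latticeLinePts (c : ℝ) (q : Fin d → ℚ) {w : Fin d → ℝ}
    (hw : w ∈ latticePts d) : c • Pi.map (fun _ => Rat.cast) q + w ∈ latticeLinePts d := by
  obtain ⟨r, z, hz, hrz⟩ := exists_mem_latticePts_smul_eq_ratCast q
  exact ⟨c * r, z, hz, w, hw, by rw [← hrz, mul_smul]⟩

lemma denseRange_ratCast_pi :
    DenseRange (Pi.map fun _ => Rat.cast : (Fin d → ℚ) → Fin d → ℝ) :=
  DenseRange.piMap fun _ => Rat.denseRange_cast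

lemma dense_latticeLinePts : Dense (latticeLinePts d) :=
  denseRange_ratCast_pi.mono <| range_subset_iff.2 fun q => by
    simpa using smul_ratCast_add_mem_latticeLinePts 1 q zero_mem_latticePts

lemma exists_mem_latticePts_apply_ne {f : (Fin d → ℝ) →ₗ[ℝ] ℝ} (hf : f ≠ 0) (b : ℝ) :
    ∃ w ∈ latticePts d, f w ≠ b := by
  by_contra! h
  have hb : b = 0 := by rw [← h 0 zero_mem_latticePts, map_zero]
  refine hf (LinearMap.pi_ext' fun i => LinearMap.ext_ring ?_)
  simpa [hb] using h _ (single_one_mem_latticePts i)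

-- Project rational points onto the hyperplane centrally from a lattice point `w` outside it.
lemma hyperplane_subset_closure_inter_latticeLinePts {f : (Fin d → ℝ) →ₗ[ℝ] ℝ} (hf : f ≠ 0)
    (b : ℝ) : {x | f x = b} ⊆ closure ({x | f x = b} ∩ latticeLinePts d) := by
  rintro x rfl
  obtain ⟨w, hw, hwx⟩ := exists_mem_latticePts_apply_ne hf (f x)
  have hfc : Continuous f := f.continuous_of_finiteDimensional
  have hne : f (x - w) ≠ 0 := by rw [map_sub]; exact sub_ne_zero.2 hwx.symm
  let proj : (Fin d → ℝ) → Fin d → ℝ := fun y => (f (x - w) / f y) • y + w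
  have proj_sub : proj (x - w) = x := by
    simp only [proj, div_self hne, one_smul, sub_add_cancel]
  have proj_cont : ContinuousAt proj (x - w) :=
    ((continuousAt_const.div hfc.continuousAt hne).smul continuousAt_id).add continuousAt_const
  have hdense : x - w ∈ closure ({y | f y ≠ 0} ∩ range (Pi.map fun _ => Rat.cast)) :=
    (isOpen_ne_fun hfc continuous_const).inter_closure ⟨hne, denseRange_ratCast_pi _⟩
  have proj_mapsTo : MapsTo proj ({y | f y ≠ 0} ∩ range (Pi.map fun _ => Rat.cast))
      ({y | f y = f x} ∩ latticeLinePts d) := by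
    rintro _ ⟨hq, q, rfl⟩
    refine ⟨?_, smul_ratCast_add_mem_latticeLinePts _ q hw⟩
    simp only [proj, mem_ofPred_eq, map_add, map_smul, smul_eq_mul, div_mul_cancel₀ _ hq, map_sub,
      sub_add_cancel]
  simpa only [proj_sub] using proj_cont.continuousWithinAt.mem_closure hdense proj_mapsTo

lemma affineSubspace_subset_closure_inter_latticeLinePts (A : AffineSubspace ℝ (Fin d → ℝ))
    (hA : d ≤ Module.finrank ℝ A.direction + 1) :
    (A : Set (Fin d → ℝ)) ⊆ closure (A ∩ latticeLinePts d) := by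
  intro x hx
  have hle := A.direction.finrank_le
  rw [Module.finrank_fin_fun] at hle
  rcases hle.eq_or_lt with hfull | hlt
  · have hA_top : A = ⊤ := (AffineSubspace.direction_eq_top_iff_of_nonempty ⟨x, hx⟩).1
      (Submodule.eq_top_of_finrank_eq (by simpa using hfull))
    simpa [hA_top] using dense_latticeLinePts x
  · obtain ⟨f, hf, hker⟩ := exists_eq_ker_of_finrank_add_one_eq (W := A.direction)
      (by rw [Module.finrank_fin_fun]; lia)
    have hA_eq : (A : Set (Fin d → ℝ)) = {y | f y = f x} := by
      ext y
      rw [SetLike.mem_coe, ← AffineSubspace.vsub_right_mem_direction_iff_mem hx, hker]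
      simp [sub_eq_zero]
    rw [hA_eq]
    exact hyperplane_subset_closure_inter_latticeLinePts hf (f x) rfl

end Density

section IntrinsicInterior

open Topology

variable {V : Type*} [NormedAddCommGroup V] [NormedSpace ℝ V] {P : Set V} {x y : V}

lemma mem_intrinsicInterior_iff_mem_nhdsWithin :
    x ∈ intrinsicInterior ℝ P ↔ x ∈ affineSpan ℝ P ∧ P ∈ 𝓝[affineSpan ℝ P] x := by
  simp only [mem_intrinsicInterior, mem_interior_iff_mem_nhds]
  constructor
  · rintro ⟨y, hy, rfl⟩
    exact ⟨y.2, preimage_coe_mem_nhds_subtype.1 hy⟩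
  · rintro ⟨hx, hP⟩
    exact ⟨⟨x, hx⟩, preimage_coe_mem_nhds_subtype.2 hP, rfl⟩

-- The homothety with centre `x` and ratio `t⁻¹` pulls the neighbourhood `P` of `y` back to a
-- neighbourhood of `lineMap x y t`, which lies in `P` by convexity.
lemma lineMap_mem_intrinsicInterior (hP : Convex ℝ P) (hx : x ∈ P)
    (hy : y ∈ intrinsicInterior ℝ P) {t : ℝ} (ht : t ∈ Ioc (0 : ℝ) 1) :
    AffineMap.lineMap x y t ∈ intrinsicInterior ℝ P := by
  rw [mem_intrinsicInterior_iff_mem_nhdsWithin] at hy ⊢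
  have hxA : x ∈ affineSpan ℝ P := subset_affineSpan ℝ P hx
  refine ⟨AffineMap.lineMap_mem t hxA hy.1, ?_⟩
  let g : V → V := fun u => AffineMap.lineMap x u t⁻¹
  have g_lineMap : g (AffineMap.lineMap x y t) = y := by simp [g, ht.1.ne']
  have lineMap_g (u : V) : AffineMap.lineMap x (g u) t = u := by simp [g, ht.1.ne']
  have g_tendsto : Filter.Tendsto g (𝓝[affineSpan ℝ P] AffineMap.lineMap x y t)
      (𝓝[affineSpan ℝ P] y) := by
    have g_cont : Continuous g := by
      simp only [g, AffineMap.lineMap_apply_module]; fun_prop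
    have := g_cont.continuousWithinAt.tendsto_nhdsWithin
      (x := AffineMap.lineMap x y t) fun u (hu : u ∈ affineSpan ℝ P) =>
        AffineMap.lineMap_mem t⁻¹ hxA hu
    rwa [g_lineMap] at this
  filter_upwards [g_tendsto hy.2] with u hu
  rw [← lineMap_g u]
  exact hP.lineMap_mem hx hu ⟨ht.1.le, ht.2⟩

lemma subset_closure_intrinsicInterior [FiniteDimensional ℝ V] (hP : Convex ℝ P) :
    P ⊆ closure (intrinsicInterior ℝ P) := by
  intro x hx
  obtain ⟨y, hy⟩ := Set.Nonempty.intrinsicInterior hP ⟨x, hx⟩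
  have hzero : (0 : ℝ) ∈ closure (Ioc 0 1) := by simp [closure_Ioc]
  rw [← AffineMap.lineMap_apply_zero (k := ℝ) x y]
  exact map_mem_closure AffineMap.lineMap_continuous hzero fun t ht =>
    lineMap_mem_intrinsicInterior hP hx hy ht

lemma intrinsicInterior_subset_closure_inter {S : Set V}
    (hS : (affineSpan ℝ P : Set V) ⊆ closure (affineSpan ℝ P ∩ S)) :
    intrinsicInterior ℝ P ⊆ closure (P ∩ S) := by
  intro x hx
  obtain ⟨hxA, hPx⟩ := mem_intrinsicInterior_iff_mem_nhdsWithin.1 hx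
  obtain ⟨U, hU, hxU, hUP⟩ := mem_nhdsWithin.1 hPx
  refine closure_mono ?_ (hU.inter_closure ⟨hxU, hS hxA⟩)
  rintro y ⟨hyU, hyA, hyS⟩
  exact ⟨hUP ⟨hyU, hyA⟩, hyS⟩

end IntrinsicInterior

section ConvexBodies

variable {d : ℕ} {P Q : Set (Fin d → ℝ)}

lemma subset_closure_inter_latticeLinePts (hP : Convex ℝ P)
    (hPdim : d ≤ Module.finrank ℝ (affineSpan ℝ P).direction + 1) :
    P ⊆ closure (P ∩ latticeLinePts d) :=
  (subset_closure_intrinsicInterior hP).trans <| closure_minimal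
    (intrinsicInterior_subset_closure_inter
      (affineSubspace_subset_closure_inter_latticeLinePts _ hPdim)) isClosed_closure

lemma subset_of_ehrhart_le (hP : Convex ℝ P) (hPb : Bornology.IsBounded P) (hQ : IsCompact Q)
    (hPdim : d ≤ Module.finrank ℝ (affineSpan ℝ P).direction + 1)
    (h : ∀ (w : Fin d → ℤ) (s : ℝ), 0 < s →
      ehrhart (translateSet P (fun i => (w i : ℝ))) s ≤
      ehrhart (translateSet Q (fun i => (w i : ℝ))) s) :
    P ⊆ Q := by
  refine (subset_closure_inter_latticeLinePts hP hPdim).trans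
    (closure_minimal ?_ hQ.isClosed)
  refine inter_latticeLinePts_subset_of_ehrhart_le hPb hQ.isBounded fun w hw => ?_
  choose m hm using hw
  simpa only [← hm] using h m

theorem stmt3_general (hP : Convex ℝ P) (hPc : IsCompact P) (hQ : Convex ℝ Q) (hQc : IsCompact Q)
    (hPdim : d ≤ Module.finrank ℝ (affineSpan ℝ P).direction + 1)
    (hQdim : d ≤ Module.finrank ℝ (affineSpan ℝ Q).direction + 1)
    (h : ∀ (w : Fin d → ℤ) (s : ℝ), 0 < s →
      ehrhart (translateSet P (fun i => (w i : ℝ))) s =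
      ehrhart (translateSet Q (fun i => (w i : ℝ))) s) :
    P = Q :=
  Subset.antisymm
    (subset_of_ehrhart_le hP hPc.isBounded hQc hPdim fun w s hs => (h w s hs).le)
    (subset_of_ehrhart_le hQ hQc.isBounded hPc hQdim fun w s hs => (h w s hs).ge)

lemma IsPolytope.convex (hP : IsPolytope P) : Convex ℝ P := by
  obtain ⟨V, -, rfl⟩ := hP
  exact convex_convexHull ℝ _

lemma IsPolytope.isCompact (hP : IsPolytope P) : IsCompact P := by
  obtain ⟨V, -, rfl⟩ := hP
  exact V.finite_toSet.isCompact_convexHull ℝ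

end ConvexBodies

/-- two semi-rational polytopes of codimension 0 or 1 with the same real
Ehrhart functions on all integer translates are equal. -/
theorem stmt3 {d : ℕ} (P Q : Set (Fin d → ℝ))
    (hP : IsSemiRationalPolytope P) (hQ : IsSemiRationalPolytope Q)
    (hPdim : Module.finrank ℝ (affineSpan ℝ P).direction = d ∨
             Module.finrank ℝ (affineSpan ℝ P).direction + 1 = d)
    (hQdim : Module.finrank ℝ (affineSpan ℝ Q).direction = d ∨
             Module.finrank ℝ (affineSpan ℝ Q).direction + 1 = d)
    (h : ∀ (w : Fin d → ℤ) (s : ℝ), 0 < s →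
      ehrhart (translateSet P (fun i => (w i : ℝ))) s =
      ehrhart (translateSet Q (fun i => (w i : ℝ))) s) :
    P = Q := by
  exact stmt3_general hP.1.convex hP.1.isCompact hQ.1.convex hQ.1.isCompact (by lia) (by lia) h
end

section
/- Let P and Q be polytopes in ℝ^d such that L_P(s) = L_Q(s) for every real s > 0. Then L_{ppyr(P)}(s) = L_{ppyr(Q)}(s) for every real s > 0, where ppyr(P) = conv(P ∪ {0}). -/
open Set MeasureTheory Pointwise

/-!
Fix a convex body `P` and a locally finite set `Λ`. The times `t ≥ 0` at which `t • P` contains a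
given point form a closed interval, so every point reached has a first time. The dilate
`s • ppyr P` is the union of the dilates `t • P` with `0 ≤ t ≤ s`, hence the disjoint union over
these `t` of the sets of points first reached at time `t`. For `t > 0`, the number of points of `Λ`
first reached at time `t` is the jump of `t ↦ #(t • P ∩ Λ)` at `t` from the left, and at time `0`
only the origin is reached. So this counting function determines the one of `ppyr P`.
-/

open Filter Topology

lemma eventually_nhdsLT_mem_iff_not_isLeast {α : Type*} [LinearOrder α] [TopologicalSpace α]
    [ClosedIicTopology α] {A : Set α} (hord : A.OrdConnected) (hclosed : IsClosed A) (t : α) :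
    ∀ᶠ u in 𝓝[<] t, u ∈ A ↔ t ∈ A ∧ ¬ IsLeast A t := by
  by_cases ht : t ∈ A
  · by_cases hleast : IsLeast A t
    · filter_upwards [self_mem_nhdsWithin] with u hut
      exact iff_of_false (fun hu ↦ (hleast.2 hu).not_gt hut) (fun h ↦ h.2 hleast)
    · obtain ⟨a, ha, hat⟩ : ∃ a ∈ A, a < t := by
        by_contra! hlower
        exact hleast ⟨ht, hlower⟩
      filter_upwards [Ioo_mem_nhdsLT hat] with u hu
      exact iff_of_true (hord.out ha ht (Ioo_subset_Icc_self hu)) ⟨ht, hleast⟩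
  · filter_upwards [nhdsWithin_le_nhds (hclosed.isOpen_compl.mem_nhds ht)] with u hu
    exact iff_of_false hu (fun h ↦ ht h.1)

lemma ncard_iUnion_congr {ι α β : Type*} {A : ι → Set α} {B : ι → Set β}
    (hA : Pairwise (Function.onFun Disjoint A)) (hB : Pairwise (Function.onFun Disjoint B))
    (hAfin : ∀ i, (A i).Finite) (hBfin : ∀ i, (B i).Finite)
    (hcard : ∀ i, (A i).ncard = (B i).ncard) : (⋃ i, A i).ncard = (⋃ i, B i).ncard := by
  have hequiv (i : ι) : Nonempty (A i ≃ B i) := by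
    have := (hAfin i).to_subtype
    have := (hBfin i).to_subtype
    exact Finite.card_eq.1 (hcard i)
  exact Nat.card_congr <| (unionEqSigmaOfDisjoint hA).trans <|
    (Equiv.sigmaCongrRight fun i ↦ (hequiv i).some).trans (unionEqSigmaOfDisjoint hB).symm

section HittingTimes

variable {E : Type*} [AddCommGroup E] [Module ℝ E] {P : Set E}

/-- The times `t ≥ 0` at which the dilate `t • P` contains the point `x`. -/
def hitTimes (P : Set E) (x : E) : Set ℝ := {t | 0 ≤ t ∧ x ∈ t • P}

/-- The points which the growing dilates of `P` reach for the first time at time `t`. -/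
def firstHit (P : Set E) (t : ℝ) : Set E := {x | IsLeast (hitTimes P x) t}

lemma firstHit_subset_smul (t : ℝ) : firstHit P t ⊆ t • P := fun _ hx ↦ hx.1.2

lemma pairwise_disjoint_firstHit (P : Set E) : Pairwise (Function.onFun Disjoint (firstHit P)) :=
  fun _ _ hne ↦ disjoint_left.2 fun _ ht hu ↦ hne (ht.unique hu)

lemma firstHit_zero (hP : P.Nonempty) : firstHit P 0 = {0} := by
  ext x
  have hmem : 0 ∈ hitTimes P x ↔ x = 0 := by simp [hitTimes, zero_smul_set hP]
  exact ⟨fun hx ↦ hmem.1 hx.1, fun hx ↦ ⟨hmem.2 hx, fun _ ht ↦ ht.1⟩⟩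

lemma convex_hitTimes (hP : Convex ℝ P) (x : E) : Convex ℝ (hitTimes P x) := by
  rintro a ⟨ha, hxa⟩ b ⟨hb, hxb⟩ α β hα hβ hαβ
  refine ⟨by positivity, ?_⟩
  rw [hP.add_smul (by positivity) (by positivity), smul_assoc, smul_assoc,
    ← Convex.combo_self hαβ x]
  exact add_mem_add (smul_mem_smul_set hxa) (smul_mem_smul_set hxb)

lemma convexHull_union_zero (hne : P.Nonempty) (hP : Convex ℝ P) :
    convexHull ℝ (P ∪ {0}) = Icc (0 : ℝ) 1 • P := by
  rw [union_singleton, convexHull_insert hne, hP.convexHull_eq, convexJoin_singleton_left,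
    ← iUnion_smul_right_image]
  simp [segment_eq_image]

lemma smul_convexHull_union_zero (hne : P.Nonempty) (hP : Convex ℝ P) {s : ℝ} (hs : 0 < s) :
    s • convexHull ℝ (P ∪ {0}) = Icc 0 s • P := by
  rw [convexHull_union_zero hne hP, ← smul_assoc, LinearOrderedField.smul_Icc hs, mul_zero,
    mul_one]

variable [TopologicalSpace E] [ContinuousSMul ℝ E] [T1Space E] {Λ : Set E}

lemma isClosed_hitTimes (hP : IsCompact P) (x : E) : IsClosed (hitTimes P x) := by
  have := isCompact_iff_compactSpace.1 hP
  have hproj : hitTimes P x = Prod.fst '' {z : ℝ × P | 0 ≤ z.1 ∧ z.1 • (z.2 : E) = x} := by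
    ext t
    simp [hitTimes, mem_smul_set]
  rw [hproj]
  refine isClosedMap_fst_of_compactSpace _ (.inter ?_ ?_)
  · exact isClosed_Ici.preimage continuous_fst
  · exact isClosed_singleton.preimage (by fun_prop)

lemma Icc_zero_smul_eq_iUnion_firstHit (hP : IsCompact P) (s : ℝ) :
    Icc 0 s • P = ⋃ t : Icc 0 s, firstHit P t := by
  ext x
  rw [mem_iUnion]
  constructor
  · rintro ⟨t, ht, p, hp, rfl⟩
    have hhit : t ∈ hitTimes P (t • p) := ⟨ht.1, smul_mem_smul_set hp⟩
    have hbdd : BddBelow (hitTimes P (t • p)) := ⟨0, fun _ hu ↦ hu.1⟩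
    have hleast := (isClosed_hitTimes hP (t • p)).isLeast_csInf ⟨t, hhit⟩ hbdd
    exact ⟨⟨_, hleast.1.1, (hleast.2 hhit).trans ht.2⟩, hleast⟩
  · rintro ⟨t, hx⟩
    obtain ⟨p, hp, rfl⟩ := firstHit_subset_smul _ hx
    exact smul_mem_smul t.2 hp

lemma eventually_smul_inter_eq_sdiff_firstHit (hconv : Convex ℝ P) (hcomp : IsCompact P)
    (hΛ : ∀ K, IsCompact K → (K ∩ Λ).Finite) {t : ℝ} (ht : 0 < t) :
    ∀ᶠ u in 𝓝[<] t, u • P ∩ Λ = (t • P ∩ Λ) \ (firstHit P t ∩ Λ) := by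
  have hfin : (Icc 0 t • P ∩ Λ).Finite := hΛ _ (isCompact_Icc.smul_set hcomp)
  have hpointwise := (eventually_all_finite hfin).2 fun x _ ↦
    eventually_nhdsLT_mem_iff_not_isLeast (convex_hitTimes hconv x).ordConnected
      (isClosed_hitTimes hcomp x) t
  filter_upwards [hpointwise, Ioo_mem_nhdsLT ht] with u hu hut
  ext x
  have hsub {v : ℝ} (hv : v ∈ Icc 0 t) : v • P ⊆ Icc 0 t • P := smul_set_subset_smul hv
  have hiff (hx : x ∈ Icc 0 t • P) (hxΛ : x ∈ Λ) :
      x ∈ u • P ↔ x ∈ t • P ∧ x ∉ firstHit P t := by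
    simpa [firstHit, hitTimes, hut.1.le, ht.le] using hu x ⟨hx, hxΛ⟩
  constructor
  · rintro ⟨hxu, hxΛ⟩
    obtain ⟨hxt, hfirst⟩ := (hiff (hsub ⟨hut.1.le, hut.2.le⟩ hxu) hxΛ).1 hxu
    exact ⟨⟨hxt, hxΛ⟩, fun h ↦ hfirst h.1⟩
  · rintro ⟨⟨hxt, hxΛ⟩, hfirst⟩
    exact ⟨(hiff (hsub ⟨ht.le, le_rfl⟩ hxt) hxΛ).2 ⟨hxt, fun h ↦ hfirst ⟨h, hxΛ⟩⟩, hxΛ⟩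

lemma eventually_ncard_smul_inter_add_ncard_firstHit (hconv : Convex ℝ P) (hcomp : IsCompact P)
    (hΛ : ∀ K, IsCompact K → (K ∩ Λ).Finite) {t : ℝ} (ht : 0 < t) :
    ∀ᶠ u in 𝓝[<] t, (u • P ∩ Λ).ncard + (firstHit P t ∩ Λ).ncard = (t • P ∩ Λ).ncard := by
  filter_upwards [eventually_smul_inter_eq_sdiff_firstHit hconv hcomp hΛ ht] with u hu
  rw [hu]
  exact ncard_sdiff_add_ncard_of_subset (inter_subset_inter_left Λ (firstHit_subset_smul t))
    (hΛ _ (hcomp.smul t))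

lemma ncard_firstHit_inter_congr {Q : Set E} (hPne : P.Nonempty) (hPconv : Convex ℝ P)
    (hPcomp : IsCompact P) (hQne : Q.Nonempty) (hQconv : Convex ℝ Q) (hQcomp : IsCompact Q)
    (hΛ : ∀ K, IsCompact K → (K ∩ Λ).Finite)
    (hcard : ∀ s : ℝ, 0 < s → (s • P ∩ Λ).ncard = (s • Q ∩ Λ).ncard) {t : ℝ} (ht : 0 ≤ t) :
    (firstHit P t ∩ Λ).ncard = (firstHit Q t ∩ Λ).ncard := by
  obtain rfl | ht := ht.eq_or_lt
  · rw [firstHit_zero hPne, firstHit_zero hQne]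
  · obtain ⟨u, hu, hjumpP, hjumpQ⟩ := (Eventually.and (Ioo_mem_nhdsLT ht) <|
      (eventually_ncard_smul_inter_add_ncard_firstHit hPconv hPcomp hΛ ht).and
        (eventually_ncard_smul_inter_add_ncard_firstHit hQconv hQcomp hΛ ht)).exists
    have hcard_t := hcard t ht
    have hcard_u := hcard u hu.1
    lia

theorem stmt4_general {Q : Set E} (hPne : P.Nonempty) (hPconv : Convex ℝ P)
    (hPcomp : IsCompact P) (hQne : Q.Nonempty) (hQconv : Convex ℝ Q) (hQcomp : IsCompact Q)
    (hΛ : ∀ K, IsCompact K → (K ∩ Λ).Finite)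
    (hcard : ∀ s : ℝ, 0 < s → (s • P ∩ Λ).ncard = (s • Q ∩ Λ).ncard) {s : ℝ} (hs : 0 < s) :
    (s • convexHull ℝ (P ∪ {0}) ∩ Λ).ncard = (s • convexHull ℝ (Q ∪ {0}) ∩ Λ).ncard := by
  have hdisj (R : Set E) :
      Pairwise (Function.onFun Disjoint fun t : Icc 0 s ↦ firstHit R t ∩ Λ) := fun t u htu ↦
    (pairwise_disjoint_firstHit R (Subtype.coe_ne_coe.2 htu)).mono inter_subset_left
      inter_subset_left
  have hfin {R : Set E} (hR : IsCompact R) (t : Icc 0 s) : (firstHit R t ∩ Λ).Finite :=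
    (hΛ _ (hR.smul (t : ℝ))).subset (inter_subset_inter_left Λ (firstHit_subset_smul _))
  rw [smul_convexHull_union_zero hPne hPconv hs, smul_convexHull_union_zero hQne hQconv hs,
    Icc_zero_smul_eq_iUnion_firstHit hPcomp, Icc_zero_smul_eq_iUnion_firstHit hQcomp,
    iUnion_inter, iUnion_inter]
  exact ncard_iUnion_congr (hdisj P) (hdisj Q) (hfin hPcomp) (hfin hQcomp) fun t ↦
    ncard_firstHit_inter_congr hPne hPconv hPcomp hQne hQconv hQcomp hΛ hcard t.2.1

end HittingTimes

lemma latticePts_eq_span (d : ℕ) :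
    latticePts d = Submodule.span ℤ (range (Pi.basisFun ℝ (Fin d))) := by
  ext x
  simp [latticePts, Module.Basis.mem_span_iff_repr_mem, eq_comm]

lemma finite_inter_latticePts {d : ℕ} {K : Set (Fin d → ℝ)} (hK : Bornology.IsBounded K) :
    (K ∩ latticePts d).Finite := by
  rw [latticePts_eq_span]
  exact ZSpan.setFinite_inter _ hK

namespace IsPolytope

variable {d : ℕ} {P : Set (Fin d → ℝ)}

lemma nonempty (hP : IsPolytope P) : P.Nonempty := by
  obtain ⟨V, hV, rfl⟩ := hP
  exact (Finset.coe_nonempty.2 hV).convexHull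

lemma convex_s4 (hP : IsPolytope P) : Convex ℝ P := by
  obtain ⟨V, -, rfl⟩ := hP
  exact convex_convexHull ℝ _

lemma isCompact_s4 (hP : IsPolytope P) : IsCompact P := by
  obtain ⟨V, -, rfl⟩ := hP
  exact V.finite_toSet.isCompact_convexHull ℝ

end IsPolytope

/-- if two polytopes have the same real Ehrhart function, then so do
their pseudopyramids `ppyr(P) = conv(P ∪ {0})`. -/
theorem stmt4 {d : ℕ} (P Q : Set (Fin d → ℝ)) (hP : IsPolytope P) (hQ : IsPolytope Q)
    (h : ∀ s : ℝ, 0 < s → ehrhart P s = ehrhart Q s) :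
    ∀ s : ℝ, 0 < s →
      ehrhart (convexHull ℝ (P ∪ {0})) s = ehrhart (convexHull ℝ (Q ∪ {0})) s := by
  intro s hs
  exact stmt4_general hP.nonempty hP.convex_s4 hP.isCompact_s4 hQ.nonempty hQ.convex_s4 hQ.isCompact_s4
    (fun _ hK ↦ finite_inter_latticePts hK.isBounded) h hs
end

section
/- Let P = ⋂_{i=1}^n {x ∈ ℝ^d : ⟨a_i, x⟩ ≤ b_i} be a full-dimensional polytope (compact with nonempty interior), with facets-candidates F_i = P ∩ {x : ⟨a_i, x⟩ = b_i}, and call F_i a back facet when b_i < 0. Then ppyr(P) = conv(P ∪ {0}) equals the union of P together with the sets conv(F_i ∪ {0}) over all i with b_i < 0, and this union is interior-disjoint: the interiors of P and of the sets conv(F_i ∪ {0}) (i with b_i < 0) are pairwise disjoint. -/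
open Set MeasureTheory Pointwise

/-!
Write `f i = ⟨a_i, ·⟩`. If `0 ∈ P`, then `ppyr(P) = P` and there are no back facets. Otherwise, move
a point `x ∈ P` straight towards the origin. Constraints with `0 ≤ b i` stay valid, and a constraint
with `b i < 0` fails exactly below the scale `b i / f i x ∈ (0, 1]`. At the largest of these scales
`r` the point `r • x` lies on a back facet, so `t • x` lies in `P` for `t ∈ [r, 1]` and in the
pseudopyramid of that facet for `t ∈ [0, r]`.

Disjointness of interiors is weak separation by a nonzero linear functional: `f i` separates `P`
from the pseudopyramid of a back facet `F i`, and `(b i)⁻¹ • f i - (b j)⁻¹ • f j` separates the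
pseudopyramids of two back facets. If the latter functional vanishes, then `F i = F j`.
-/

theorem isOpenMap_of_dual_ne_zero {𝕜 E : Type*} [Field 𝕜] [TopologicalSpace 𝕜]
    [ContinuousSub 𝕜] [AddCommGroup E] [Module 𝕜 E] [TopologicalSpace E] [ContinuousAdd E]
    [ContinuousSMul 𝕜 E] {g : Module.Dual 𝕜 E} (hg : g ≠ 0) : IsOpenMap g := by
  obtain ⟨v, hv⟩ := DFunLike.ne_iff.1 hg
  rw [LinearMap.zero_apply] at hv
  exact IsOpenMap.of_sections fun y =>
    ⟨fun c => y + (c - g y) • (g v)⁻¹ • v, Continuous.continuousAt (by fun_prop), by simp,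
      fun c => by simp [hv]⟩

section OrderedField

variable {𝕜 E ι : Type*} [Field 𝕜] [LinearOrder 𝕜] [AddCommGroup E] [Module 𝕜 E]

variable (𝕜) in
/-- The pseudopyramid of `K`: the convex hull of `K` together with the origin. -/
def pseudopyramid (K : Set E) : Set E := convexHull 𝕜 (K ∪ {0})

/-- The polyhedron cut out by the half-spaces `f i x ≤ b i`, possibly unbounded, empty or
lower-dimensional; some of the functionals `f i` may be zero. -/
def polyhedron (f : ι → Module.Dual 𝕜 E) (b : ι → 𝕜) : Set E := ⋂ i, {x | f i x ≤ b i}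

/-- The face of a polyhedron on which the `i`-th constraint is tight (the paper's `F_i`). It may
have any dimension, or be empty. It is a back facet when `b i < 0`. -/
def polyhedronFace (f : ι → Module.Dual 𝕜 E) (b : ι → 𝕜) (i : ι) : Set E :=
  polyhedron f b ∩ {x | f i x = b i}

section Pseudopyramid

variable {K L : Set E}

theorem subset_pseudopyramid : K ⊆ pseudopyramid 𝕜 K :=
  subset_union_left.trans (subset_convexHull 𝕜 _)

theorem zero_mem_pseudopyramid : (0 : E) ∈ pseudopyramid 𝕜 K :=
  subset_convexHull 𝕜 _ (mem_union_right K rfl)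

theorem pseudopyramid_mono (h : K ⊆ L) : pseudopyramid 𝕜 K ⊆ pseudopyramid 𝕜 L :=
  convexHull_mono (union_subset_union_left {0} h)

theorem pseudopyramid_subset (hL : Convex 𝕜 L) (hKL : K ⊆ L) (hL₀ : 0 ∈ L) :
    pseudopyramid 𝕜 K ⊆ L :=
  convexHull_min (union_subset hKL (singleton_subset_iff.2 hL₀)) hL

variable [IsStrictOrderedRing 𝕜]

theorem smul_mem_pseudopyramid {t : 𝕜} {x : E} (ht : t ∈ Icc 0 1) (hx : x ∈ K) :
    t • x ∈ pseudopyramid 𝕜 K :=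
  (convex_convexHull 𝕜 _).smul_mem_of_zero_mem zero_mem_pseudopyramid (subset_pseudopyramid hx) ht

theorem exists_smul_eq_of_mem_pseudopyramid (hK : Convex 𝕜 K) (hK₀ : K.Nonempty) {y : E}
    (hy : y ∈ pseudopyramid 𝕜 K) : ∃ t ∈ Icc (0 : 𝕜) 1, ∃ x ∈ K, t • x = y := by
  rw [pseudopyramid, union_singleton, convexHull_insert hK₀, hK.convexHull_eq,
    convexJoin_singleton_left] at hy
  simp only [mem_iUnion₂, segment_eq_image, smul_zero, zero_add] at hy
  obtain ⟨x, hx, t, ht, rfl⟩ := hy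
  exact ⟨t, ht, x, hx, rfl⟩

end Pseudopyramid

section Polyhedron

variable {f : ι → Module.Dual 𝕜 E} {b : ι → 𝕜} {x : E} {i j : ι}

theorem mem_polyhedron : x ∈ polyhedron f b ↔ ∀ i, f i x ≤ b i := mem_iInter

theorem zero_mem_polyhedron : 0 ∈ polyhedron f b ↔ ∀ i, 0 ≤ b i := by
  simp only [mem_polyhedron, map_zero]

theorem polyhedronFace_subset : polyhedronFace f b i ⊆ polyhedron f b := inter_subset_left

theorem polyhedronFace_eq_of_inv_smul_eq (hi : b i ≠ 0) (hj : b j ≠ 0)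
    (h : (b i)⁻¹ • f i = (b j)⁻¹ • f j) : polyhedronFace f b i = polyhedronFace f b j := by
  have htight {k : ι} (hk : b k ≠ 0) (x : E) : f k x = b k ↔ ((b k)⁻¹ • f k) x = 1 := by
    rw [LinearMap.smul_apply, smul_eq_mul, inv_mul_eq_one₀ hk, eq_comm]
  simp only [polyhedronFace, htight hi, htight hj, h]

variable [IsStrictOrderedRing 𝕜]

theorem convex_polyhedron : Convex 𝕜 (polyhedron f b) :=
  convex_iInter fun i => convex_halfSpace_le (f i).isLinear (b i)

theorem smul_mem_polyhedron {r : 𝕜} (hr : r ∈ Icc 0 1) (hx : x ∈ polyhedron f b)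
    (hscale : ∀ i, b i < 0 → b i / f i x ≤ r) : r • x ∈ polyhedron f b := by
  refine mem_polyhedron.2 fun i => ?_
  have hi : f i x ≤ b i := mem_polyhedron.1 hx i
  rw [map_smul, smul_eq_mul]
  rcases lt_or_ge (b i) 0 with hneg | hnonneg
  · exact (div_le_iff_of_neg (hi.trans_lt hneg)).1 (hscale i hneg)
  · calc
      r * f i x ≤ r * b i := mul_le_mul_of_nonneg_left hi hr.1
      _ ≤ b i := mul_le_of_le_one_left hnonneg hr.2

theorem exists_smul_mem_polyhedronFace [Finite ι] (hx : x ∈ polyhedron f b)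
    (hback : ∃ i, b i < 0) :
    ∃ i, b i < 0 ∧ ∃ r ∈ Ioc (0 : 𝕜) 1, r • x ∈ polyhedronFace f b i := by
  obtain ⟨i, hi, hmax⟩ :=
    exists_max_image {i | b i < 0} (fun i => b i / f i x) (toFinite _) hback
  have hbi : f i x ≤ b i := mem_polyhedron.1 hx i
  have hfi : f i x < 0 := hbi.trans_lt hi
  have hpos : 0 < b i / f i x := div_pos_of_neg_of_neg hi hfi
  have hle : b i / f i x ≤ 1 := (div_le_one_of_neg hfi).2 hbi
  refine ⟨i, hi, b i / f i x, ⟨hpos, hle⟩, smul_mem_polyhedron ⟨hpos.le, hle⟩ hx hmax, ?_⟩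
  rw [mem_ofPred_eq, map_smul, smul_eq_mul, div_mul_cancel₀ _ hfi.ne]

theorem smul_mem_polyhedron_or_mem_pseudopyramid_polyhedronFace [Finite ι] {t : 𝕜}
    (ht : t ∈ Icc 0 1) (hx : x ∈ polyhedron f b) (hback : ∃ i, b i < 0) :
    t • x ∈ polyhedron f b ∨ ∃ i, b i < 0 ∧ t • x ∈ pseudopyramid 𝕜 (polyhedronFace f b i) := by
  obtain ⟨i, hi, r, hr, hrx⟩ := exists_smul_mem_polyhedronFace hx hback
  rcases le_total r t with hrt | htr
  · have hconvex : Convex 𝕜 (LinearMap.toSpanSingleton 𝕜 E x ⁻¹' polyhedron f b) :=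
      convex_polyhedron.linear_preimage _
    have hone : (1 : 𝕜) • x ∈ polyhedron f b := by rwa [one_smul]
    exact Or.inl (hconvex.ordConnected.out hrx.1 hone ⟨hrt, ht.2⟩)
  · refine Or.inr ⟨i, hi, ?_⟩
    have hscaled : (t / r) • r • x ∈ pseudopyramid 𝕜 (polyhedronFace f b i) :=
      smul_mem_pseudopyramid ⟨div_nonneg ht.1 hr.1.le, div_le_one_of_le₀ htr hr.1.le⟩ hrx
    rwa [smul_smul, div_mul_cancel₀ _ hr.1.ne'] at hscaled

theorem pseudopyramid_polyhedron_subset [Finite ι] :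
    pseudopyramid 𝕜 (polyhedron f b) ⊆
      polyhedron f b ∪ ⋃ i ∈ {i | b i < 0}, pseudopyramid 𝕜 (polyhedronFace f b i) := by
  intro y hy
  by_cases hzero : 0 ∈ polyhedron f b
  · exact Or.inl (pseudopyramid_subset convex_polyhedron subset_rfl hzero hy)
  have hback : ∃ i, b i < 0 := by simpa [zero_mem_polyhedron] using hzero
  simp only [mem_union, mem_iUnion₂, mem_ofPred_eq, exists_prop]
  rcases (polyhedron f b).eq_empty_or_nonempty with hempty | hne
  · have hy₀ : y = 0 := by simpa [pseudopyramid, hempty] using hy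
    exact Or.inr (hback.imp fun i hi => ⟨hi, hy₀ ▸ zero_mem_pseudopyramid⟩)
  · obtain ⟨t, ht, x, hx, rfl⟩ := exists_smul_eq_of_mem_pseudopyramid convex_polyhedron hne hy
    exact smul_mem_polyhedron_or_mem_pseudopyramid_polyhedronFace ht hx hback

theorem pseudopyramid_polyhedron [Finite ι] :
    pseudopyramid 𝕜 (polyhedron f b) =
      polyhedron f b ∪ ⋃ i ∈ {i | b i < 0}, pseudopyramid 𝕜 (polyhedronFace f b i) :=
  pseudopyramid_polyhedron_subset.antisymm <| union_subset subset_pseudopyramid <|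
    iUnion₂_subset fun _ _ => pseudopyramid_mono polyhedronFace_subset

theorem le_apply_of_mem_pseudopyramid_polyhedronFace (hi : b i < 0)
    (hx : x ∈ pseudopyramid 𝕜 (polyhedronFace f b i)) : b i ≤ f i x := by
  refine pseudopyramid_subset (convex_halfSpace_ge (f i).isLinear (b i))
    (fun y hy => hy.2.ge) ?_ hx
  simpa using hi.le

theorem inv_smul_sub_inv_smul_apply_nonpos_of_mem_pseudopyramid (hi : b i < 0) (hj : b j < 0)
    (hx : x ∈ pseudopyramid 𝕜 (polyhedronFace f b i)) :
    ((b i)⁻¹ • f i - (b j)⁻¹ • f j) x ≤ 0 := by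
  refine pseudopyramid_subset
    (convex_halfSpace_le ((b i)⁻¹ • f i - (b j)⁻¹ • f j).isLinear 0) ?_ (map_zero _).le hx
  rintro y ⟨hyP, hyi⟩
  have hone : 1 ≤ (b j)⁻¹ * f j y := by
    rw [← div_eq_inv_mul]
    exact (one_le_div_of_neg hj).2 (mem_polyhedron.1 hyP j)
  have hyi : f i y = b i := hyi
  simpa [hyi, hi.ne] using hone

end Polyhedron

section Interior

variable [TopologicalSpace 𝕜] [TopologicalSpace E] [ContinuousAdd E] [ContinuousSMul 𝕜 E]
  [IsStrictOrderedRing 𝕜] [OrderTopology 𝕜]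

theorem disjoint_interior_of_dual_separates {g : Module.Dual 𝕜 E} (hg : g ≠ 0) {c : 𝕜}
    {S T : Set E} (hS : ∀ x ∈ S, g x ≤ c) (hT : ∀ x ∈ T, c ≤ g x) :
    Disjoint (interior S) (interior T) := by
  have hS' : MapsTo g (interior S) (Iio c) := by
    rw [← interior_Iic]
    exact (isOpenMap_of_dual_ne_zero hg).mapsTo_interior hS
  have hT' : MapsTo g (interior T) (Ioi c) := by
    rw [← interior_Ici]
    exact (isOpenMap_of_dual_ne_zero hg).mapsTo_interior hT
  exact disjoint_left.2 fun x hxS hxT => lt_asymm (hS' hxS) (hT' hxT)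

variable {f : ι → Module.Dual 𝕜 E} {b : ι → 𝕜} {i j : ι}

theorem disjoint_interior_polyhedron_pseudopyramid_polyhedronFace (hi : b i < 0) :
    Disjoint (interior (polyhedron f b))
      (interior (pseudopyramid 𝕜 (polyhedronFace f b i))) := by
  by_cases hfi : f i = 0
  · have hempty : polyhedron f b = ∅ := eq_empty_of_forall_notMem fun x hx => by
      have hle : f i x ≤ b i := mem_polyhedron.1 hx i
      rw [hfi, LinearMap.zero_apply] at hle
      exact hle.not_gt hi
    simp [hempty]
  · exact disjoint_interior_of_dual_separates hfi (fun x hx => mem_polyhedron.1 hx i)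
      fun x hx => le_apply_of_mem_pseudopyramid_polyhedronFace hi hx

theorem disjoint_interior_pseudopyramid_polyhedronFace (hi : b i < 0) (hj : b j < 0)
    (hne : polyhedronFace f b i ≠ polyhedronFace f b j) :
    Disjoint (interior (pseudopyramid 𝕜 (polyhedronFace f b i)))
      (interior (pseudopyramid 𝕜 (polyhedronFace f b j))) := by
  have hg : (b i)⁻¹ • f i - (b j)⁻¹ • f j ≠ 0 := fun h =>
    hne (polyhedronFace_eq_of_inv_smul_eq hi.ne hj.ne (sub_eq_zero.1 h))
  refine disjoint_interior_of_dual_separates hg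
    (fun x hx => inv_smul_sub_inv_smul_apply_nonpos_of_mem_pseudopyramid hi hj hx) fun x hx => ?_
  rw [← neg_sub, LinearMap.neg_apply, neg_nonneg]
  exact inv_smul_sub_inv_smul_apply_nonpos_of_mem_pseudopyramid hj hi hx

theorem pairwise_disjoint_interior_polyhedron_pseudopyramid :
    (insert (interior (polyhedron f b))
      ((fun i => interior (pseudopyramid 𝕜 (polyhedronFace f b i))) '' {i | b i < 0})).Pairwise
      Disjoint := by
  refine pairwise_insert_of_symm.2 ⟨?_, ?_⟩
  · rintro _ ⟨i, hi, rfl⟩ _ ⟨j, hj, rfl⟩ hne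
    exact disjoint_interior_pseudopyramid_polyhedronFace hi hj fun h => hne (by simp only [h])
  · rintro _ ⟨i, hi, rfl⟩ -
    exact disjoint_interior_polyhedron_pseudopyramid_polyhedronFace hi

theorem stmt5_general [Finite ι] (f : ι → Module.Dual 𝕜 E) (b : ι → 𝕜) :
    (pseudopyramid 𝕜 (polyhedron f b) =
      polyhedron f b ∪ ⋃ i ∈ {i | b i < 0}, pseudopyramid 𝕜 (polyhedronFace f b i)) ∧
    (insert (interior (polyhedron f b))
      ((fun i => interior (pseudopyramid 𝕜 (polyhedronFace f b i))) '' {i | b i < 0})).Pairwise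
      Disjoint :=
  ⟨pseudopyramid_polyhedron, pairwise_disjoint_interior_polyhedron_pseudopyramid⟩

end Interior

end OrderedField

/-- the pseudopyramid of a full-dimensional polytope is the
interior-disjoint union of the polytope and the pseudopyramids of its back facets. -/
theorem stmt5 {d n : ℕ} (a : Fin n → Fin d → ℝ) (b : Fin n → ℝ)
    (P : Set (Fin d → ℝ))
    (hPdef : P = ⋂ i, {x : Fin d → ℝ | dotProd (a i) x ≤ b i})
    (hcomp : IsCompact P) (hint : (interior P).Nonempty)
    (F : Fin n → Set (Fin d → ℝ))
    (hF : ∀ i, F i = P ∩ {x : Fin d → ℝ | dotProd (a i) x = b i}) :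
    (convexHull ℝ (P ∪ {0}) =
      P ∪ ⋃ i ∈ {i : Fin n | b i < 0}, convexHull ℝ (F i ∪ {0})) ∧
    (insert (interior P)
      ((fun i => interior (convexHull ℝ (F i ∪ {0}))) '' {i : Fin n | b i < 0})).Pairwise
      (fun S T => Disjoint S T) := by
  obtain rfl : F = _ := funext hF
  subst hPdef
  exact stmt5_general (fun i => dotProductEquiv ℝ (Fin d) (a i)) b
end

section
/- Let (s_l)_{l≥1} be a sequence of real numbers none of which is an integer, such that the fractional parts {s_l} tend to 0 as l → ∞, and let (k_l)_{l≥1} be a sequence of pairwise distinct integers. Suppose b, b' ∈ ℝ are such that for every l there exist integers m_l and m'_l with s_l·(b + k_l) = m_l and s_l·(b' + k_l) = m'_l. Then b = b'. (That is, the infinite system of equations s_l·(b + k_l) ∈ ℤ has at most one real solution b.) -/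
open Set MeasureTheory Pointwise

/-!
Put `d = b - b'` and suppose `d ≠ 0`. Both `s i * (b + k i)` and `s i * d` are integers, so
`(b + k i) / d` is rational for every `i`. Subtracting two of these values with `k i ≠ k j` shows
that `d` is rational. Since `s i * d` is an integer, all the `s i` then have a common denominator
`n`, so a nonzero fractional part of `s i` is at least `1 / |n|`, contrary to `{s i} → 0`.
-/

open Filter Topology

section Subfield

variable {K : Type*} [Field K] {F : Subfield K}

lemma div_mem_of_mul_mem_of_mul_mem {c x y : K} (hc : c ≠ 0) (hx : c * x ∈ F) (hy : c * y ∈ F) :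
    x / y ∈ F := by
  rw [← mul_div_mul_left x y hc]
  exact div_mem hx hy

lemma sub_mem_of_mul_add_mem {c₁ c₂ b b' x₁ x₂ : K} (hc₁ : c₁ ≠ 0) (hc₂ : c₂ ≠ 0)
    (hx₁ : x₁ ∈ F) (hx₂ : x₂ ∈ F) (hx : x₁ ≠ x₂)
    (hb₁ : c₁ * (b + x₁) ∈ F) (hb₁' : c₁ * (b' + x₁) ∈ F)
    (hb₂ : c₂ * (b + x₂) ∈ F) (hb₂' : c₂ * (b' + x₂) ∈ F) :
    b - b' ∈ F := by
  have div_mem_of_solution {c y : K} (hc : c ≠ 0) (hb : c * (b + y) ∈ F)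
      (hb' : c * (b' + y) ∈ F) : (b + y) / (b - b') ∈ F := by
    refine div_mem_of_mul_mem_of_mul_mem hc hb ?_
    simpa only [← mul_sub, add_sub_add_right_eq_sub] using sub_mem hb hb'
  have quotient_mem : (x₁ - x₂) / (b - b') ∈ F := by
    simpa only [← sub_div, add_sub_add_left_eq_sub] using
      sub_mem (div_mem_of_solution hc₁ hb₁ hb₁') (div_mem_of_solution hc₂ hb₂ hb₂')
  rw [← div_div_cancel₀ (b := b - b') (sub_ne_zero.mpr hx)]
  exact div_mem (sub_mem hx₁ hx₂) quotient_mem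

end Subfield

section CommonDenominator

variable {R : Type*} [Ring R] [LinearOrder R] [IsStrictOrderedRing R] [FloorRing R]

lemma one_le_fract_mul_abs_intCast {x : R} {n : ℤ} (hn : n ≠ 0) (hx : Int.fract x ≠ 0)
    (hxn : x * n ∈ (Int.castRingHom R).range) : 1 ≤ Int.fract x * |(n : R)| := by
  have fract_mul_mem : Int.fract x * n ∈ (Int.castRingHom R).range := by
    rw [← Int.self_sub_floor, sub_mul]
    exact sub_mem hxn (mul_mem (intCast_mem _ _) (intCast_mem _ _))
  obtain ⟨m, hm : (m : R) = Int.fract x * n⟩ := fract_mul_mem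
  have hm0 : m ≠ 0 := by
    rintro rfl
    exact mul_ne_zero hx (Int.cast_ne_zero.mpr hn) (by rw [← hm, Int.cast_zero])
  calc (1 : R) ≤ |(m : R)| := by exact_mod_cast Int.one_le_abs hm0
    _ = Int.fract x * |(n : R)| := by rw [hm, abs_mul, Int.abs_fract]

lemma eventually_fract_eq_zero_of_mul_intCast_mem [TopologicalSpace R] [OrderTopology R]
    [ContinuousMul R] {ι : Type*} {l : Filter ι} {s : ι → R} {n : ℤ} (hn : n ≠ 0)
    (hsn : ∀ i, s i * n ∈ (Int.castRingHom R).range)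
    (hfract : Tendsto (fun i ↦ Int.fract (s i)) l (𝓝 0)) :
    ∀ᶠ i in l, Int.fract (s i) = 0 := by
  have tendsto_mul : Tendsto (fun i ↦ Int.fract (s i) * |(n : R)|) l (𝓝 0) := by
    simpa only [zero_mul] using hfract.mul_const |(n : R)|
  filter_upwards [tendsto_mul.eventually_lt_const one_pos] with i hi
  by_contra hne
  exact hi.not_ge (one_le_fract_mul_abs_intCast hn hne (hsn i))

end CommonDenominator

lemma mul_num_mem_range_intCast_of_mul_ratCast_mem {K : Type*} [Field K] [CharZero K] {x : K}
    {q : ℚ} (hx : x * q ∈ (Int.castRingHom K).range) : x * q.num ∈ (Int.castRingHom K).range := by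
  have num_eq : (q.num : K) = q * q.den := by exact_mod_cast (Rat.mul_den_eq_num q).symm
  rw [num_eq, ← mul_assoc]
  exact mul_mem hx (natCast_mem _ _)

theorem stmt11_general {K ι : Type*} [Field K] [LinearOrder K] [IsStrictOrderedRing K]
    [FloorRing K] [TopologicalSpace K] [OrderTopology K] {l : Filter ι} [l.NeBot]
    {s : ι → K} {k : ι → ℚ} (hs : ∀ i, s i ∉ (Int.castRingHom K).range)
    (hfract : Tendsto (fun i ↦ Int.fract (s i)) l (𝓝 0)) (hk : ∃ i j, k i ≠ k j) {b b' : K}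
    (hb : ∀ i, s i * (b + k i) ∈ (Int.castRingHom K).range)
    (hb' : ∀ i, s i * (b' + k i) ∈ (Int.castRingHom K).range) :
    b = b' := by
  by_contra hne
  have s_ne_zero (i) : s i ≠ 0 := fun h ↦ hs i (h ▸ zero_mem _)
  have mul_sub_mem (i) : s i * (b - b') ∈ (Int.castRingHom K).range := by
    simpa only [← mul_sub, add_sub_add_right_eq_sub] using sub_mem (hb i) (hb' i)
  obtain ⟨q, hq : (q : K) = b - b'⟩ : b - b' ∈ (Rat.castHom K).fieldRange := by
    have rat_of_int {x : K} : x ∈ (Int.castRingHom K).range → x ∈ (Rat.castHom K).fieldRange := by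
      rintro ⟨m, rfl⟩
      exact intCast_mem _ m
    obtain ⟨i, j, hij⟩ := hk
    exact sub_mem_of_mul_add_mem (s_ne_zero i) (s_ne_zero j) ⟨k i, rfl⟩ ⟨k j, rfl⟩
      (Rat.cast_injective.ne hij) (rat_of_int (hb i)) (rat_of_int (hb' i))
      (rat_of_int (hb j)) (rat_of_int (hb' j))
  have num_ne_zero : q.num ≠ 0 := by
    intro h
    rw [Rat.num_eq_zero.mp h, Rat.cast_zero] at hq
    exact hne (sub_eq_zero.mp hq.symm)
  obtain ⟨i, hi⟩ := (eventually_fract_eq_zero_of_mul_intCast_mem num_ne_zero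
    (fun i ↦ mul_num_mem_range_intCast_of_mul_ratCast_mem (hq ▸ mul_sub_mem i)) hfract).exists
  exact hs i (Int.fract_eq_zero_iff.mp hi)

/-- the infinite system of pseudo-Diophantine equations
`s_l (b + k_l) ∈ ℤ` has at most one real solution `b`. -/
theorem stmt11 (s : ℕ → ℝ) (k : ℕ → ℤ)
    (hs : ∀ l, ¬ ∃ m : ℤ, s l = (m : ℝ))
    (hfract : Filter.Tendsto (fun l => Int.fract (s l)) Filter.atTop (nhds 0))
    (hk : Function.Injective k)
    (b b' : ℝ)
    (hb : ∀ l, ∃ m : ℤ, s l * (b + (k l : ℝ)) = (m : ℝ))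
    (hb' : ∀ l, ∃ m : ℤ, s l * (b' + (k l : ℝ)) = (m : ℝ)) :
    b = b' :=
  stmt11_general (k := fun l ↦ (k l : ℚ)) (by simpa [eq_comm] using hs) hfract
    ⟨0, 1, by simp [hk.eq_iff]⟩ (by simpa [eq_comm] using hb) (by simpa [eq_comm] using hb')
end

section
/- Let a_1, …, a_n ∈ ℤ^d be primitive integer vectors. Suppose b_1, …, b_n and c_1, …, c_n are real numbers such that P = ⋂_{i=1}^n {x ∈ ℝ^d : ⟨a_i, x⟩ ≤ b_i} and Q = ⋂_{i=1}^n {x ∈ ℝ^d : ⟨a_i, x⟩ ≤ c_i} are both compact with nonempty interior, that for every i one has b_i = max_{x∈P} ⟨a_i, x⟩ and c_i = max_{x∈Q} ⟨a_i, x⟩ (so each hyperplane {x : ⟨a_i, x⟩ = b_i} supports P and each {x : ⟨a_i, x⟩ = c_i} supports Q, i.e. each set F_i = P ∩ {x : ⟨a_i, x⟩ = b_i} is a nonempty face), and that L_{P+w}(s) = L_{Q+w}(s) for every w ∈ ℤ^d and every real s > 0. Then b_i = c_i for all i; in particular P = Q. -/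
open Set MeasureTheory Pointwise

/-!
Fix `s > 0` irrational and so small that `P ∪ Q` has diameter less than `s⁻¹`. A lattice point `m`
lies in `s • (P + w)` exactly when `s⁻¹ m - w ∈ P`, and by the choice of `s` at most one `m`
satisfies `s⁻¹ m - w ∈ P ∪ Q`. Equality of the two counts therefore says that `P` and `Q` contain
the same points of the form `s⁻¹ m - w` with `m, w ∈ ℤ^d`. These points are dense because `s⁻¹` is
irrational, so `interior P ⊆ closure Q` and vice versa, and a compact convex set with nonempty
interior is the closure of its interior.
-/

open Filter Topology Bornology

theorem denseRange_mul_intCast_sub_intCast {t : ℝ} (ht : Irrational t) :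
    DenseRange fun p : ℤ × ℤ => t * p.1 - p.2 := by
  have hdense : Dense (AddSubgroup.closure {t, 1} : Set ℝ) :=
    dense_addSubgroupClosure_pair_iff.2 (by simpa only [div_one] using ht)
  refine hdense.mono fun y hy => ?_
  obtain ⟨m, k, rfl⟩ := AddSubgroup.mem_closure_pair.1 hy
  exact ⟨(m, -k), by simp [mul_comm]⟩

theorem denseRange_pi_mul_intCast_sub_intCast {ι : Type*} {t : ℝ} (ht : Irrational t) :
    DenseRange fun (p : ι → ℤ × ℤ) i => t * (p i).1 - (p i).2 :=
  DenseRange.piMap fun _ => denseRange_mul_intCast_sub_intCast ht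

theorem subsingleton_setOf_mul_intCast_sub_mem {ι : Type*} [Fintype ι] {A : Set (ι → ℝ)} {t : ℝ}
    (hA : IsBounded A) (ht : Metric.diam A < t) (w : ι → ℝ) :
    {m : ι → ℤ | (fun i => t * m i - w i) ∈ A}.Subsingleton := by
  intro m hm k hk
  funext i
  have ht₀ : 0 < t := Metric.diam_nonneg.trans_lt ht
  have hdist : |(t * m i - w i) - (t * k i - w i)| < t :=
    ((dist_le_pi_dist _ _ i).trans (Metric.dist_le_diam_of_mem hA hm hk)).trans_lt ht
  have hlt : t * |(m i - k i : ℝ)| < t := by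
    rwa [sub_sub_sub_cancel_right, ← mul_sub, abs_mul, abs_of_pos ht₀] at hdist
  have habs : |m i - k i| < 1 := by exact_mod_cast (mul_lt_iff_lt_one_right ht₀).1 hlt
  exact sub_eq_zero.1 (Int.abs_lt_one_iff.1 habs)

section HalfSpaces

variable {ι : Sort*} {d : ℕ}

theorem convex_iInter_dotProd_le (a : ι → Fin d → ℝ) (b : ι → ℝ) :
    Convex ℝ (⋂ i, {x : Fin d → ℝ | dotProd (a i) x ≤ b i}) :=
  convex_iInter fun i => convex_halfSpace_le
    ⟨dotProduct_add (a i), fun k x => dotProduct_smul k (a i) x⟩ (b i)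

theorem isClosed_iInter_dotProd_le (a : ι → Fin d → ℝ) (b : ι → ℝ) :
    IsClosed (⋂ i, {x : Fin d → ℝ | dotProd (a i) x ≤ b i}) :=
  isClosed_iInter fun _ =>
    isClosed_le (continuous_const.dotProduct continuous_id) continuous_const

theorem closure_interior_eq_of_eq_iInter_dotProd_le {a : ι → Fin d → ℝ} {b : ι → ℝ}
    {K : Set (Fin d → ℝ)} (hK : K = ⋂ i, {x : Fin d → ℝ | dotProd (a i) x ≤ b i})
    (hint : (interior K).Nonempty) : closure (interior K) = K := by
  subst hK
  rw [(convex_iInter_dotProd_le a b).closure_interior_eq_closure_of_nonempty_interior hint,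
    (isClosed_iInter_dotProd_le a b).closure_eq]

end HalfSpaces

section Ehrhart

variable {d : ℕ} {P Q : Set (Fin d → ℝ)} {s : ℝ}

theorem ehrhart_translateSet (hs : s ≠ 0) (w : Fin d → ℝ) :
    ehrhart (translateSet P w) s = {m : Fin d → ℤ | (fun i => s⁻¹ * m i - w i) ∈ P}.ncard := by
  have hinj : Function.Injective fun (m : Fin d → ℤ) i => (m i : ℝ) :=
    fun _ _ h => funext fun i => Int.cast_injective (congrFun h i)
  rw [ehrhart, ← ncard_image_of_injective _ hinj]
  congr 1
  ext z
  have hmem : z ∈ s • translateSet P w ↔ s⁻¹ • z - w ∈ P := by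
    rw [mem_smul_set_iff_inv_smul_mem₀ hs, translateSet, image_add_right, mem_preimage,
      sub_eq_add_neg]
  rw [mem_inter_iff, hmem]
  constructor
  · rintro ⟨hz, hlattice⟩
    choose m hm using hlattice
    obtain rfl : z = fun i => (m i : ℝ) := funext hm
    exact ⟨m, hz, rfl⟩
  · rintro ⟨m, hm, rfl⟩
    exact ⟨hm, fun i => ⟨m i, rfl⟩⟩

theorem mem_of_ehrhart_translateSet_eq (hbdd : IsBounded (P ∪ Q)) (hs : Metric.diam (P ∪ Q) < s⁻¹)
    {w : Fin d → ℝ} (hehr : ehrhart (translateSet P w) s = ehrhart (translateSet Q w) s)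
    {m : Fin d → ℤ} (hm : (fun i => s⁻¹ * m i - w i) ∈ P) :
    (fun i => s⁻¹ * m i - w i) ∈ Q := by
  have hs₀ : s ≠ 0 := (inv_pos.1 (Metric.diam_nonneg.trans_lt hs)).ne'
  have hsub := subsingleton_setOf_mul_intCast_sub_mem hbdd hs w
  rw [ehrhart_translateSet hs₀, ehrhart_translateSet hs₀] at hehr
  have hfin : {k : Fin d → ℤ | (fun i => s⁻¹ * k i - w i) ∈ P}.Finite :=
    hsub.finite.subset fun _ hk => Or.inl hk
  have hcard := (ncard_pos hfin).2 ⟨m, hm⟩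
  obtain ⟨k, hk⟩ := nonempty_of_ncard_ne_zero (hehr ▸ hcard).ne'
  exact hsub (Or.inr hk) (Or.inl hm) ▸ hk

theorem interior_subset_closure_of_ehrhart_translateSet_eq (hbdd : IsBounded (P ∪ Q))
    (hirr : Irrational s) (hs : Metric.diam (P ∪ Q) < s⁻¹)
    (hehr : ∀ w : Fin d → ℤ, ehrhart (translateSet P fun i => (w i : ℝ)) s =
      ehrhart (translateSet Q fun i => (w i : ℝ)) s) :
    interior P ⊆ closure Q := by
  have hdense := denseRange_pi_mul_intCast_sub_intCast (ι := Fin d) hirr.inv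
  refine (hdense.open_subset_closure_inter isOpen_interior).trans (closure_mono ?_)
  rintro _ ⟨hP, p, rfl⟩
  exact mem_of_ehrhart_translateSet_eq hbdd hs (hehr fun i => (p i).2) (interior_subset hP)

theorem stmt12_general (hP : IsBounded P) (hQ : IsBounded Q)
    (hPreg : closure (interior P) = P) (hQreg : closure (interior Q) = Q)
    (hehr : ∀ᶠ s in 𝓝[>] 0, ∀ w : Fin d → ℤ, ehrhart (translateSet P fun i => (w i : ℝ)) s =
      ehrhart (translateSet Q fun i => (w i : ℝ)) s) :
    P = Q := by
  have hsmall : ∀ᶠ s : ℝ in 𝓝[>] 0, Metric.diam (P ∪ Q) < s⁻¹ :=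
    tendsto_inv_nhdsGT_zero.eventually_gt_atTop _
  obtain ⟨δ, hδ, hIoo⟩ := mem_nhdsGT_iff_exists_Ioo_subset.1 (hehr.and hsmall)
  obtain ⟨s, hirr, hsmem⟩ := dense_irrational.exists_between hδ
  obtain ⟨hehr_s, hdiam⟩ := hIoo hsmem
  have hPQ := interior_subset_closure_of_ehrhart_translateSet_eq (hP.union hQ) hirr hdiam hehr_s
  have hQP := interior_subset_closure_of_ehrhart_translateSet_eq (hQ.union hP) hirr
    (union_comm P Q ▸ hdiam) fun w => (hehr_s w).symm
  have hPclosed : IsClosed P := hPreg ▸ isClosed_closure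
  have hQclosed : IsClosed Q := hQreg ▸ isClosed_closure
  rw [hQclosed.closure_eq] at hPQ
  rw [hPclosed.closure_eq] at hQP
  exact (hPreg ▸ closure_minimal hPQ hQclosed).antisymm (hQreg ▸ closure_minimal hQP hPclosed)

end Ehrhart

/-- recovering the right-hand sides of the supporting half-spaces of a
full-dimensional semi-rational polytope from the Ehrhart functions of its integer
translates. -/
theorem stmt12 {d n : ℕ} (a : Fin n → Fin d → ℤ)
    (hprim : ∀ i, Finset.univ.gcd (a i) = 1)
    (b c : Fin n → ℝ) (P Q : Set (Fin d → ℝ))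
    (hPdef : P = ⋂ i, {x : Fin d → ℝ | dotProd (fun j => (a i j : ℝ)) x ≤ b i})
    (hQdef : Q = ⋂ i, {x : Fin d → ℝ | dotProd (fun j => (a i j : ℝ)) x ≤ c i})
    (hPc : IsCompact P) (hPi : (interior P).Nonempty)
    (hQc : IsCompact Q) (hQi : (interior Q).Nonempty)
    (hbmax : ∀ i, IsGreatest ((fun x => dotProd (fun j => (a i j : ℝ)) x) '' P) (b i))
    (hcmax : ∀ i, IsGreatest ((fun x => dotProd (fun j => (a i j : ℝ)) x) '' Q) (c i))
    (hehr : ∀ (w : Fin d → ℤ) (s : ℝ), 0 < s →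
      ehrhart (translateSet P (fun i => (w i : ℝ))) s =
      ehrhart (translateSet Q (fun i => (w i : ℝ))) s) :
    (∀ i, b i = c i) ∧ P = Q := by
  obtain rfl : P = Q := stmt12_general hPc.isBounded hQc.isBounded
    (closure_interior_eq_of_eq_iInter_dotProd_le hPdef hPi)
    (closure_interior_eq_of_eq_iInter_dotProd_le hQdef hQi)
    (eventually_mem_nhdsWithin.mono fun s hs w => hehr w s hs)
  exact ⟨fun i => (hbmax i).unique (hcmax i), rfl⟩
end
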